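/- Let A ∈ ℂ^{p×p} be a nonzero positive semidefinite matrix with relative rank r(A) = rank(A)/p, let α > 0, let μ₀ = μ₀(α) be the unique solution in (−λ_min⁺(A), ∞) of α = (1/p) Σ_{i: λ_i(A)>0} λ_i(A)²/(λ_i(A)+μ₀)², and let λ₀ = μ₀ (1 − (1/(αp)) Σ_{i: λ_i(A)>0} λ_i(A)/(λ_i(A)+μ₀)). Then: if α > r(A) then μ₀ < 0 and λ₀ < 0; if α = r(A) then μ₀ = 0 and λ₀ = 0; and if α < r(A) then μ₀ > 0 and λ₀ < 0. -/

import Mathlib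

open Matrix Filter
open scoped ComplexOrder

/-- The smallest positive eigenvalue `λ_min⁺` of a Hermitian matrix. -/
noncomputable def lminp {p : ℕ} {A : Matrix (Fin p) (Fin p) ℂ} (hA : A.IsHermitian) : ℝ :=
  sInf {x : ℝ | 0 < x ∧ ∃ i, hA.eigenvalues i = x}

/-- The spectral sum `Σ_{i : eᵢ > 0} eᵢ / (eᵢ + μ)`; for a positive semidefinite matrix with
eigenvalues `e` and `A + μ I` invertible this equals `tr[A (A + μ I)⁻¹]`. -/
noncomputable def specSum1 {p : ℕ} (e : Fin p → ℝ) (μ : ℝ) : ℝ :=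
  ∑ i, if 0 < e i then e i / (e i + μ) else 0

/-- The spectral sum `Σ_{i : eᵢ > 0} eᵢ² / (eᵢ + μ)²`; for a positive semidefinite matrix with
eigenvalues `e` and `A + μ I` invertible this equals `tr[A² (A + μ I)⁻²]`. -/
noncomputable def specSum2 {p : ℕ} (e : Fin p → ℝ) (μ : ℝ) : ℝ :=
  ∑ i, if 0 < e i then (e i) ^ 2 / (e i + μ) ^ 2 else 0

/-!
On `(-λ_min⁺, ∞)` the sum `specSum2` is strictly decreasing, and at `0` it counts the positive
eigenvalues, so comparing `α` with `r(A)` amounts to comparing `0` with `μ₀`. The sign of `λ₀` comes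
from `e / (e + μ) - e² / (e + μ)² = μ * e / (e + μ)²`: summing over the positive eigenvalues gives
`λ₀ = -μ₀² * (Σ e / (e + μ₀)²) / (Σ e² / (e + μ₀)²)`, which is negative unless `μ₀ = 0`.
-/

section Eigenvalues

variable {𝕜 n : Type*} [RCLike 𝕜] [Fintype n] [DecidableEq n] {A : Matrix n n 𝕜}

lemma rank_eq_card_pos_eigenvalues (hA : A.PosSemidef) :
    A.rank = Finset.card {i | 0 < hA.1.eigenvalues i} := by
  rw [hA.1.rank_eq_card_non_zero_eigs, Fintype.card_subtype]
  simp only [(hA.eigenvalues_nonneg _).lt_iff_ne']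

lemma exists_eigenvalue_pos (hA : A.PosSemidef) (hA0 : A ≠ 0) :
    ∃ i, 0 < hA.1.eigenvalues i := by
  obtain ⟨i, hi⟩ := Function.ne_iff.mp (mt hA.1.eigenvalues_eq_zero_iff.mp hA0)
  exact ⟨i, (hA.eigenvalues_nonneg i).lt_of_ne' hi⟩

end Eigenvalues

lemma lminp_le_eigenvalue {p : ℕ} {A : Matrix (Fin p) (Fin p) ℂ} (hA : A.IsHermitian) {i : Fin p}
    (hi : 0 < hA.eigenvalues i) : lminp hA ≤ hA.eigenvalues i :=
  csInf_le ⟨0, fun _ hx ↦ hx.1.le⟩ ⟨hi, i, rfl⟩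

lemma strictAntiOn_sq_div_add_sq {𝕜 : Type*} [Field 𝕜] [LinearOrder 𝕜] [IsStrictOrderedRing 𝕜]
    {a : 𝕜} (ha : a ≠ 0) : StrictAntiOn (fun x ↦ a ^ 2 / (a + x) ^ 2) {x | 0 < a + x} := by
  intro x hx y _ hxy
  have hx' : 0 < a + x := hx
  dsimp only
  gcongr

lemma sum_filter_pos {ι M : Type*} [Fintype ι] [AddCommMonoid M] [PartialOrder M]
    [IsOrderedCancelAddMonoid M] {P : ι → Prop} [DecidablePred P] {f : ι → M} (hP : ∃ i, P i)
    (hf : ∀ i, P i → 0 < f i) : 0 < ∑ i with P i, f i := by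
  have hne : (Finset.univ.filter P).Nonempty := by simpa [Finset.filter_nonempty_iff] using hP
  exact Finset.sum_pos (fun i hi ↦ hf i (Finset.mem_filter.mp hi).2) hne

section SpectralSums

variable {p : ℕ} {e : Fin p → ℝ} {μ : ℝ}

lemma specSum1_eq_sum_filter (e : Fin p → ℝ) (μ : ℝ) :
    specSum1 e μ = ∑ i with 0 < e i, e i / (e i + μ) :=
  (Finset.sum_filter _ _).symm

lemma specSum2_eq_sum_filter (e : Fin p → ℝ) (μ : ℝ) :
    specSum2 e μ = ∑ i with 0 < e i, e i ^ 2 / (e i + μ) ^ 2 :=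
  (Finset.sum_filter _ _).symm

lemma specSum2_strictAntiOn (he : ∃ i, 0 < e i) :
    StrictAntiOn (specSum2 e) {μ | ∀ i, 0 < e i → 0 < e i + μ} := by
  intro x hx y hy hxy
  simp only [specSum2_eq_sum_filter]
  have hne : (Finset.univ.filter (0 < e ·)).Nonempty := by
    simpa [Finset.filter_nonempty_iff] using he
  refine Finset.sum_lt_sum_of_nonempty hne fun i hi ↦ ?_
  have hi : 0 < e i := (Finset.mem_filter.mp hi).2
  exact strictAntiOn_sq_div_add_sq hi.ne' (hx i hi) (hy i hi) hxy

lemma specSum2_zero (e : Fin p → ℝ) : specSum2 e 0 = Finset.card {i | 0 < e i} := by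
  rw [specSum2_eq_sum_filter, Finset.cast_card]
  refine Finset.sum_congr rfl fun i hi ↦ ?_
  rw [add_zero, div_self (pow_ne_zero 2 (Finset.mem_filter.mp hi).2.ne')]

lemma specSum1_sub_specSum2 (hμ : ∀ i, 0 < e i → e i + μ ≠ 0) :
    specSum1 e μ - specSum2 e μ = μ * ∑ i with 0 < e i, e i / (e i + μ) ^ 2 := by
  rw [specSum1_eq_sum_filter, specSum2_eq_sum_filter, ← Finset.sum_sub_distrib, Finset.mul_sum]
  refine Finset.sum_congr rfl fun i hi ↦ ?_
  have := hμ i (Finset.mem_filter.mp hi).2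
  field_simp
  ring

lemma mul_one_sub_inv_specSum2_mul_specSum1_neg (he : ∃ i, 0 < e i)
    (hμ : ∀ i, 0 < e i → 0 < e i + μ) (hμ0 : μ ≠ 0) :
    μ * (1 - (specSum2 e μ)⁻¹ * specSum1 e μ) < 0 := by
  have hpos : 0 < specSum2 e μ := by
    rw [specSum2_eq_sum_filter]
    exact sum_filter_pos he fun i hi ↦ by have := hμ i hi; positivity
  have hsum : 0 < ∑ i with 0 < e i, e i / (e i + μ) ^ 2 :=
    sum_filter_pos he fun i hi ↦ by have := hμ i hi; positivity
  have hdiff := specSum1_sub_specSum2 fun i hi ↦ (hμ i hi).ne'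
  calc μ * (1 - (specSum2 e μ)⁻¹ * specSum1 e μ)
      = -(μ * (specSum1 e μ - specSum2 e μ) / specSum2 e μ) := by field_simp; ring
    _ = -(μ ^ 2 * (∑ i with 0 < e i, e i / (e i + μ) ^ 2) / specSum2 e μ) := by
      rw [hdiff, ← mul_assoc, sq]
    _ < 0 := neg_neg_of_pos (by positivity)

end SpectralSums

/-- Joint sign patterns of `μ₀` and `λ₀` (Remark 5.2): if `α > r(A)` then `μ₀ < 0` and
`λ₀ < 0`; if `α = r(A)` then `μ₀ = λ₀ = 0`; if `α < r(A)` then `μ₀ > 0` and `λ₀ < 0`. -/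
theorem stmt10 {p : ℕ} (A : Matrix (Fin p) (Fin p) ℂ)
    (hA : A.PosSemidef) (hA0 : A ≠ 0)
    (α : ℝ) (hα : 0 < α) (μ₀ lam₀ : ℝ)
    (hμ₀ : -(lminp hA.1) < μ₀ ∧ α = (p : ℝ)⁻¹ * specSum2 hA.1.eigenvalues μ₀)
    (hlam₀ : lam₀ = μ₀ * (1 - (α * p)⁻¹ * specSum1 hA.1.eigenvalues μ₀)) :
    (((A.rank : ℝ) / p < α → μ₀ < 0 ∧ lam₀ < 0)
    ∧ (α = (A.rank : ℝ) / p → μ₀ = 0 ∧ lam₀ = 0)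
    ∧ (α < (A.rank : ℝ) / p → 0 < μ₀ ∧ lam₀ < 0)) := by
  obtain ⟨hμ, hα_eq⟩ := hμ₀
  set e := hA.1.eigenvalues
  have he : ∃ i, 0 < e i := exists_eigenvalue_pos hA hA0
  have hp : (0 : ℝ) < p := Nat.cast_pos.mpr he.choose.pos
  have hαp : α * p = specSum2 e μ₀ := by rw [hα_eq, mul_comm, mul_inv_cancel_left₀ hp.ne']
  have hμ_add : ∀ i, 0 < e i → 0 < e i + μ₀ := fun i hi ↦ by
    linarith [lminp_le_eigenvalue hA.1 hi]
  have hrank : specSum2 e 0 = A.rank := by rw [specSum2_zero, rank_eq_card_pos_eigenvalues hA]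
  have hzero : ∀ i, 0 < e i → 0 < e i + 0 := by simp only [add_zero, imp_self, implies_true]
  have hanti := specSum2_strictAntiOn he
  have hlam_neg : μ₀ ≠ 0 → lam₀ < 0 := fun h ↦ by
    rw [hlam₀, hαp]
    exact mul_one_sub_inv_specSum2_mul_specSum1_neg he hμ_add h
  rw [div_lt_iff₀ hp, eq_div_iff hp.ne', lt_div_iff₀ hp, hαp, ← hrank, hanti.lt_iff_gt hzero hμ_add,
    hanti.lt_iff_gt hμ_add hzero, hanti.injOn.eq_iff hμ_add hzero]
  exact ⟨fun h ↦ ⟨h, hlam_neg h.ne⟩, fun h ↦ ⟨h, by rw [hlam₀, h, zero_mul]⟩,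
    fun h ↦ ⟨h, hlam_neg h.ne'⟩⟩
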